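/- There exists an absolute constant C > 0 such that for every θ ∈ (0,1) and every positive integer n, ∫_{A} G(s,t,u,v) ds dt du dv ≤ C · n^{2-θ} θ^{-1} (1-θ)^{-3}, and there exists an absolute constant c > 0 such that this integral is ≥ c · n^{2-θ} θ^{-1} (1-θ)^{-3} whenever additionally n^{1-θ} ≥ 8; here A = { (s,t,u,v) ∈ (0,∞)⁴ : 0 < u < 1, 1 ≤ v < n^{1/2}, t < n^{1/4} v^{-1/2}, s ≥ u^{1/2} v^{1/2} t }. -/

import Mathlib

open MeasureTheory Set Real

/-- The integrand `G(s,t,u,v)` from the paper's computation of the completely 1-summing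
norm of the identity `OH_n → ℓ^n_p`, with `θ = 2/p'`. Here `p = (s, t, u, v)`. -/
noncomputable def G (θ : ℝ) (n : ℕ) (p : ℝ × ℝ × ℝ × ℝ) : ℝ :=
  (n : ℝ) ^ (2 : ℕ) * p.1 ^ (-1 - 2 * θ) * p.2.1 ^ (-1 - 2 * θ) *
    min (min (min ((n : ℝ)⁻¹ * p.1 ^ (4 : ℝ) * p.2.2.1 ^ (-2 : ℝ) * p.2.2.2 ^ (-2 : ℝ))
                  ((n : ℝ)⁻¹ * p.2.1 ^ (4 : ℝ)))
             (min (p.1 ^ (4 : ℝ) * p.2.2.1 ^ (-2 : ℝ)) (p.2.1 ^ (4 : ℝ) * p.2.2.2 ^ (-2 : ℝ))))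
        (min (min (p.2.2.1 ^ (-2 : ℝ) * p.2.2.2 ^ (-2 : ℝ)) (p.2.2.1 ^ (-2 : ℝ)))
             (min 1 (p.2.2.2 ^ (-2 : ℝ))))

/-- The region of integration. -/
def A (n : ℕ) : Set (ℝ × ℝ × ℝ × ℝ) :=
  {p | 0 < p.1 ∧ 0 < p.2.1 ∧ 0 < p.2.2.1 ∧ 0 < p.2.2.2 ∧ p.2.2.1 < 1 ∧ 1 ≤ p.2.2.2 ∧ p.2.2.2 < (n : ℝ) ^ ((1:ℝ)/2) ∧ p.2.1 < (n : ℝ) ^ ((1:ℝ)/4) * p.2.2.2 ^ (-(1/2) : ℝ) ∧ p.2.2.1 ^ ((1:ℝ)/2) * p.2.2.2 ^ ((1:ℝ)/2) * p.2.1 ≤ p.1}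

/-!
On `A n` the minimum in `G` equals `t ^ 4 / n`, so there `G = n s ^ (-1 - 2θ) t ^ (3 - 2θ)`.
Integrating in `s`, then in `t`, then in `(u, v)` by Tonelli's theorem gives the exact value
`n ^ (2 - θ) / (8 θ (1 - θ) ^ 3) * (1 - n ^ (-(1 - θ) / 2))`, whose last factor is at most `1`, and at
least `1 / 2` as soon as `n ^ (1 - θ) ≥ 4`.
-/

section Fibers

variable {α β : Type*} [MeasurableSpace α] [MeasurableSpace β]

theorem setLIntegral_prod_eq_setLIntegral_fiber (μ : Measure α) (ν : Measure β)
    [SFinite μ] [SFinite ν] {S : Set (α × β)} {B : Set β} {I : β → Set α}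
    (hS : MeasurableSet S) (hB : MeasurableSet B) (hmem : ∀ a b, (a, b) ∈ S ↔ b ∈ B ∧ a ∈ I b)
    {f : α × β → ENNReal} (hf : Measurable f) :
    ∫⁻ p in S, f p ∂μ.prod ν = ∫⁻ b in B, ∫⁻ a in I b, f (a, b) ∂μ ∂ν := by
  rw [← lintegral_indicator hS, lintegral_prod_symm' _ (hf.indicator hS), ← lintegral_indicator hB]
  congr 1 with b
  by_cases hb : b ∈ B
  · have fiber_eq : I b = (fun a => (a, b)) ⁻¹' S := by ext a; simp [hmem, hb]
    rw [indicator_of_mem hb, fiber_eq, ← lintegral_indicator (measurable_prodMk_right hS)]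
    rfl
  · have not_mem (a : α) : (a, b) ∉ S := fun h => hb ((hmem a b).1 h).1
    simp [hb, not_mem]

end Fibers

section Powers

variable {a b c r : ℝ}

theorem setLIntegral_Ici_const_mul_rpow (hc : 0 ≤ c) (ha : 0 < a) (hr : r < -1) :
    ∫⁻ x in Ici a, ENNReal.ofReal (c * x ^ r) =
      ENNReal.ofReal (c * (-a ^ (r + 1) / (r + 1))) := by
  have nonneg : ∀ x ∈ Ioi a, 0 ≤ c * x ^ r := fun x hx =>
    mul_nonneg hc (rpow_nonneg (ha.trans hx).le r)
  rw [setLIntegral_congr Ioi_ae_eq_Ici.symm, ← ofReal_integral_eq_lintegral_ofReal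
    ((integrableOn_Ioi_rpow_of_lt hr ha).const_mul c)
    (ae_restrict_of_forall_mem measurableSet_Ioi nonneg),
    integral_const_mul, integral_Ioi_rpow_of_lt hr ha]

theorem setLIntegral_Ioc_const_mul_rpow (hc : 0 ≤ c) (ha : 0 ≤ a) (hab : a ≤ b)
    (h : -1 < r ∨ r ≠ -1 ∧ 0 < a) :
    ∫⁻ x in Ioc a b, ENNReal.ofReal (c * x ^ r) =
      ENNReal.ofReal (c * ((b ^ (r + 1) - a ^ (r + 1)) / (r + 1))) := by
  have zero_notMem (ha' : 0 < a) : (0 : ℝ) ∉ uIcc a b := notMem_uIcc_of_lt ha' (ha'.trans_le hab)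
  have integrable : IntervalIntegrable (fun x : ℝ => x ^ r) volume a b :=
    h.elim intervalIntegral.intervalIntegrable_rpow' fun h =>
      intervalIntegral.intervalIntegrable_rpow (Or.inr (zero_notMem h.2))
  have nonneg : ∀ x ∈ Ioc a b, 0 ≤ c * x ^ r := fun x hx =>
    mul_nonneg hc (rpow_nonneg (ha.trans hx.1.le) r)
  rw [← ofReal_integral_eq_lintegral_ofReal
    (((intervalIntegrable_iff_integrableOn_Ioc_of_le hab).1 integrable).const_mul c)
    (ae_restrict_of_forall_mem measurableSet_Ioc nonneg), integral_const_mul,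
    ← intervalIntegral.integral_of_le hab,
    integral_rpow (h.imp_right fun h => ⟨h.1, zero_notMem h.2⟩)]

theorem rpow_neg_half_le_inv_of_sq_le {x : ℝ} (hx : 0 ≤ x) (hc : 0 < c) (h : c ^ 2 ≤ x ^ r) :
    x ^ (-r / 2) ≤ c⁻¹ := by
  have sq_eq : (x ^ (r / 2)) ^ 2 = x ^ r := by
    rw [← rpow_mul_natCast hx, Nat.cast_ofNat, div_mul_cancel₀ r two_ne_zero]
  rw [neg_div, rpow_neg hx]
  exact inv_anti₀ hc ((sq_le_sq₀ hc.le (rpow_nonneg hx _)).1 (h.trans_eq sq_eq.symm))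

end Powers

section Integrand

theorem min_eq_inv_mul {N S T U V : ℝ} (hT : 0 ≤ T) (hU : 0 < U) (hU1 : U ≤ 1) (hV1 : 1 ≤ V)
    (hVN : V ≤ N) (hTV : T * V ≤ N) (hS : U * V * T ≤ S) :
    min (min (min (N⁻¹ * S * U⁻¹ * V⁻¹) (N⁻¹ * T)) (min (S * U⁻¹) (T * V⁻¹)))
      (min (min (U⁻¹ * V⁻¹) U⁻¹) (min 1 V⁻¹)) = N⁻¹ * T := by
  have hV : 0 < V := one_pos.trans_le hV1
  have hN : 0 < N := hV.trans_le hVN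
  have le_inv_V : N⁻¹ * T ≤ V⁻¹ := by
    rwa [inv_mul_le_iff₀ hN, ← div_eq_mul_inv, le_div_iff₀ hV]
  have inv_V_le_one : V⁻¹ ≤ 1 := inv_le_one_of_one_le₀ hV1
  have one_le_inv_U : 1 ≤ U⁻¹ := (one_le_inv₀ hU).2 hU1
  have inv_V_le : V⁻¹ ≤ U⁻¹ * V⁻¹ := le_mul_of_one_le_left (inv_nonneg.2 hV.le) one_le_inv_U
  have le_T_div_V : N⁻¹ * T ≤ T * V⁻¹ := by
    rw [mul_comm]
    gcongr
  have VT_le : V * T ≤ S * U⁻¹ := by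
    rw [le_mul_inv_iff₀ hU]
    linarith
  have le_S_div_U : N⁻¹ * T ≤ S * U⁻¹ := calc
    N⁻¹ * T ≤ 1 * T := by gcongr; exact inv_le_one_of_one_le₀ (hV1.trans hVN)
    _ ≤ V * T := by gcongr
    _ ≤ S * U⁻¹ := VT_le
  have le_first : N⁻¹ * T ≤ N⁻¹ * S * U⁻¹ * V⁻¹ := by
    rw [mul_assoc, mul_assoc]
    gcongr
    rw [← mul_assoc, le_mul_inv_iff₀ hV]
    linarith
  rw [min_eq_right le_first, min_eq_left (le_min le_S_div_U le_T_div_V), min_eq_left]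
  refine le_min (le_min ?_ ?_) (le_min ?_ le_inv_V) <;> linarith

variable {θ : ℝ} {n : ℕ}

theorem G_eq_of_mem_A {p : ℝ × ℝ × ℝ × ℝ} (hp : p ∈ A n) :
    G θ n p = n * p.2.1 ^ (3 - 2 * θ) * p.1 ^ (-1 - 2 * θ) := by
  obtain ⟨s, t, u, v⟩ := p
  obtain ⟨hs, ht, hu, hv, hu1, hv1, hvn, htv, hst⟩ := hp
  dsimp only at hs ht hu hv hu1 hv1 hvn htv hst
  have hn : (0 : ℝ) < n := by
    refine n.cast_nonneg.lt_of_ne' fun hn0 => (zero_lt_one.trans_le hv1).not_gt ?_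
    simpa [hn0] using hvn
  have V_le : v ^ (2 : ℝ) ≤ n := by
    refine (rpow_le_rpow hv.le hvn.le zero_le_two).trans_eq ?_
    rw [← rpow_mul hn.le]
    norm_num
  have TV_le : t ^ (4 : ℝ) * v ^ (2 : ℝ) ≤ n := calc
    _ ≤ ((n : ℝ) ^ ((1 : ℝ) / 4) * v ^ (-(1 / 2) : ℝ)) ^ (4 : ℝ) * v ^ (2 : ℝ) := by gcongr
    _ = n := by
      rw [mul_rpow (by positivity) (by positivity), ← rpow_mul hn.le, ← rpow_mul hv.le, mul_assoc,
        ← rpow_add hv]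
      norm_num
  have UVT_le : u ^ (2 : ℝ) * v ^ (2 : ℝ) * t ^ (4 : ℝ) ≤ s ^ (4 : ℝ) := calc
    _ = (u ^ ((1 : ℝ) / 2) * v ^ ((1 : ℝ) / 2) * t) ^ (4 : ℝ) := by
      rw [mul_rpow (by positivity) ht.le, mul_rpow (by positivity) (by positivity),
        ← rpow_mul hu.le, ← rpow_mul hv.le]
      norm_num
    _ ≤ s ^ (4 : ℝ) := by gcongr
  simp only [G]
  rw [rpow_neg hu.le, rpow_neg hv.le, min_eq_inv_mul (by positivity) (by positivity)
    (rpow_le_one hu.le hu1.le zero_le_two) (one_le_rpow hv1 zero_le_two) V_le TV_le UVT_le,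
    show 3 - 2 * θ = (-1 - 2 * θ) + 4 by ring, rpow_add ht]
  field_simp

end Integrand

section Integration

/-- The projection of `A n` to the coordinates `(t, u, v)`, with a real parameter `N` for `n`. -/
def tuvRegion (N : ℝ) : Set (ℝ × ℝ × ℝ) :=
  {q | q.2 ∈ Ioo 0 1 ×ˢ Ico 1 (N ^ ((1 : ℝ) / 2)) ∧
    q.1 ∈ Ioo 0 (N ^ ((1 : ℝ) / 4) * q.2.2 ^ (-(1 / 2) : ℝ))}

theorem measurableSet_tuvRegion (N : ℝ) : MeasurableSet (tuvRegion N) := by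
  unfold tuvRegion
  measurability

theorem measurableSet_A (n : ℕ) : MeasurableSet (A n) := by
  unfold A
  measurability

theorem mem_A_iff {n : ℕ} (s : ℝ) (q : ℝ × ℝ × ℝ) :
    (s, q) ∈ A n ↔
      q ∈ tuvRegion n ∧ s ∈ Ici (q.2.1 ^ ((1 : ℝ) / 2) * q.2.2 ^ ((1 : ℝ) / 2) * q.1) := by
  obtain ⟨t, u, v⟩ := q
  simp only [A, tuvRegion, mem_ofPred_eq, mem_prod, mem_Ioo, mem_Ico, mem_Ici]
  constructor
  · tauto
  · rintro ⟨⟨⟨⟨hu, hu1⟩, hv1, hvN⟩, ht, htv⟩, hs⟩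
    have hv : 0 < v := one_pos.trans_le hv1
    exact ⟨lt_of_lt_of_le (by positivity) hs, ht, hu, hv, hu1, hv1, hvN, htv, hs⟩

variable {θ c N : ℝ}

theorem setLIntegral_A_eq_tuvRegion (n : ℕ) (hc : 0 ≤ c) (hθ0 : 0 < θ) :
    ∫⁻ p in A n, ENNReal.ofReal (c * p.2.1 ^ (3 - 2 * θ) * p.1 ^ (-1 - 2 * θ)) =
      ∫⁻ q in tuvRegion n,
        ENNReal.ofReal (c / (2 * θ) * (q.2.1 ^ (-θ) * q.2.2 ^ (-θ)) * q.1 ^ (3 - 4 * θ)) := by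
  rw [Measure.volume_eq_prod, setLIntegral_prod_eq_setLIntegral_fiber volume volume
    (measurableSet_A n) (measurableSet_tuvRegion n) mem_A_iff (by fun_prop)]
  refine setLIntegral_congr_fun (measurableSet_tuvRegion n) ?_
  rintro ⟨t, u, v⟩ ⟨⟨⟨hu, -⟩, hv1, -⟩, ht, -⟩
  have hv : 0 < v := one_pos.trans_le hv1
  dsimp only at hu ht ⊢
  rw [setLIntegral_Ici_const_mul_rpow (by positivity) (by positivity) (by linarith),
    show -1 - 2 * θ + 1 = -(2 * θ) by ring, mul_rpow (by positivity) ht.le,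
    mul_rpow (by positivity) (by positivity), ← rpow_mul hu.le, ← rpow_mul hv.le,
    show (1 : ℝ) / 2 * -(2 * θ) = -θ by ring, show 3 - 4 * θ = (3 - 2 * θ) + -(2 * θ) by ring,
    rpow_add ht]
  congr 1
  field_simp

theorem setLIntegral_tuvRegion_eq_rectangle (hN : 0 < N) (hc : 0 ≤ c) (hθ1 : θ < 1) :
    ∫⁻ q in tuvRegion N,
        ENNReal.ofReal (c * (q.2.1 ^ (-θ) * q.2.2 ^ (-θ)) * q.1 ^ (3 - 4 * θ)) =
      ∫⁻ w in Ioo 0 1 ×ˢ Ico 1 (N ^ ((1 : ℝ) / 2)),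
        ENNReal.ofReal (c * N ^ (1 - θ) / (4 * (1 - θ)) * w.2 ^ (θ - 2) * w.1 ^ (-θ)) := by
  have one_sub_pos : 0 < 1 - θ := sub_pos.2 hθ1
  have measurableSet_rect : MeasurableSet (Ioo (0 : ℝ) 1 ×ˢ Ico 1 (N ^ ((1 : ℝ) / 2))) :=
    measurableSet_Ioo.prod measurableSet_Ico
  rw [Measure.volume_eq_prod, setLIntegral_prod_eq_setLIntegral_fiber volume volume
    (measurableSet_tuvRegion N) measurableSet_rect (fun _ _ => Iff.rfl) (by fun_prop)]
  refine setLIntegral_congr_fun measurableSet_rect ?_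
  rintro ⟨u, v⟩ ⟨⟨hu, -⟩, hv1, -⟩
  have hv : 0 < v := one_pos.trans_le hv1
  dsimp only at hu ⊢
  rw [setLIntegral_congr Ioo_ae_eq_Ioc, setLIntegral_Ioc_const_mul_rpow (by positivity) le_rfl
      (by positivity) (Or.inl (by linarith)),
    show 3 - 4 * θ + 1 = 4 * (1 - θ) by ring, zero_rpow (by positivity), sub_zero,
    mul_rpow (by positivity) (by positivity), ← rpow_mul hN.le, ← rpow_mul hv.le,
    show (1 : ℝ) / 4 * (4 * (1 - θ)) = 1 - θ by ring,
    show θ - 2 = -θ + -(1 / 2) * (4 * (1 - θ)) by ring, rpow_add hv]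
  congr 1
  field_simp

theorem setLIntegral_rectangle (hN : 1 ≤ N) (hc : 0 ≤ c) (hθ1 : θ < 1) :
    ∫⁻ w in Ioo 0 1 ×ˢ Ico 1 (N ^ ((1 : ℝ) / 2)),
        ENNReal.ofReal (c * w.2 ^ (θ - 2) * w.1 ^ (-θ)) =
      ENNReal.ofReal (c / (1 - θ) ^ 2 * (1 - N ^ (-(1 - θ) / 2))) := by
  have one_sub_pos : 0 < 1 - θ := sub_pos.2 hθ1
  have integral_u : EqOn
      (fun v => ∫⁻ u in Ioo 0 1, ENNReal.ofReal (c * v ^ (θ - 2) * u ^ (-θ)))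
      (fun v => ENNReal.ofReal (c / (1 - θ) * v ^ (θ - 2))) (Ico 1 (N ^ ((1 : ℝ) / 2))) := by
    intro v hv
    have hv0 : 0 < v := one_pos.trans_le hv.1
    dsimp only
    rw [setLIntegral_congr Ioo_ae_eq_Ioc, setLIntegral_Ioc_const_mul_rpow (by positivity) le_rfl
      zero_le_one (Or.inl (by linarith)), one_rpow, zero_rpow (by linarith), sub_zero,
      neg_add_eq_sub, mul_one_div, mul_div_right_comm]
  rw [Measure.volume_eq_prod, setLIntegral_prod_symm _ (by fun_prop),
    setLIntegral_congr_fun measurableSet_Ico integral_u, setLIntegral_congr Ico_ae_eq_Ioc,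
    setLIntegral_Ioc_const_mul_rpow (by positivity) zero_le_one (one_le_rpow hN (by norm_num))
      (Or.inr ⟨by linarith, one_pos⟩),
    one_rpow, ← rpow_mul (zero_le_one.trans hN), show θ - 2 + 1 = -(1 - θ) by ring,
    show (1 : ℝ) / 2 * -(1 - θ) = -(1 - θ) / 2 by ring]
  congr 1
  field_simp
  ring

theorem setIntegral_G {n : ℕ} (hn : 0 < n) (hθ0 : 0 < θ) (hθ1 : θ < 1) :
    ∫ p in A n, G θ n p =
      (n : ℝ) ^ (2 - θ) * θ ^ (-1 : ℝ) * (1 - θ) ^ (-3 : ℝ) / 8 *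
        (1 - (n : ℝ) ^ (-(1 - θ) / 2)) := by
  have one_sub_pos : 0 < 1 - θ := sub_pos.2 hθ1
  have n_pos : (0 : ℝ) < n := Nat.cast_pos.2 hn
  have one_le_n : (1 : ℝ) ≤ n := Nat.one_le_cast.2 hn
  have n_rpow_le_one : (n : ℝ) ^ (-(1 - θ) / 2) ≤ 1 :=
    rpow_le_one_of_one_le_of_nonpos one_le_n (by linarith)
  have nonneg : ∀ p ∈ A n, 0 ≤ n * p.2.1 ^ (3 - 2 * θ) * p.1 ^ (-1 - 2 * θ) := by
    rintro p ⟨hs, ht, -⟩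
    positivity
  rw [setIntegral_congr_fun (measurableSet_A n) fun p hp => G_eq_of_mem_A hp,
    integral_eq_lintegral_of_nonneg_ae (ae_restrict_of_forall_mem (measurableSet_A n) nonneg)
      (Measurable.aestronglyMeasurable (by fun_prop)),
    setLIntegral_A_eq_tuvRegion n n_pos.le hθ0,
    setLIntegral_tuvRegion_eq_rectangle n_pos (by positivity) hθ1,
    setLIntegral_rectangle one_le_n (by positivity) hθ1,
    ENNReal.toReal_ofReal (mul_nonneg (by positivity) (sub_nonneg.2 n_rpow_le_one)),
    show 2 - θ = 1 + (1 - θ) by ring, rpow_add n_pos, rpow_one, rpow_neg_one,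
    rpow_neg one_sub_pos.le, rpow_ofNat]
  field_simp
  ring

end Integration

theorem stmt_15 :
    (∃ C : ℝ, 0 < C ∧ ∀ θ : ℝ, 0 < θ → θ < 1 → ∀ n : ℕ, 0 < n →
      (∫ p in A n, G θ n p) ≤ C * ((n : ℝ) ^ (2 - θ) * θ ^ (-1 : ℝ) * (1 - θ) ^ (-3 : ℝ))) ∧
    (∃ c : ℝ, 0 < c ∧ ∀ θ : ℝ, 0 < θ → θ < 1 → ∀ n : ℕ, 0 < n →
      (8 : ℝ) ≤ (n : ℝ) ^ (1 - θ) →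
      c * ((n : ℝ) ^ (2 - θ) * θ ^ (-1 : ℝ) * (1 - θ) ^ (-3 : ℝ)) ≤ ∫ p in A n, G θ n p) := by
  have rate_nonneg {θ : ℝ} (hθ0 : 0 < θ) (hθ1 : θ < 1) (n : ℕ) :
      0 ≤ (n : ℝ) ^ (2 - θ) * θ ^ (-1 : ℝ) * (1 - θ) ^ (-3 : ℝ) :=
    mul_nonneg (by positivity) (rpow_nonneg (sub_nonneg.2 hθ1.le) _)
  refine ⟨⟨1 / 8, by norm_num, fun θ hθ0 hθ1 n hn => ?_⟩,
    ⟨1 / 16, by norm_num, fun θ hθ0 hθ1 n hn hn8 => ?_⟩⟩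
  · have factor_le_one : 1 - (n : ℝ) ^ (-(1 - θ) / 2) ≤ 1 := sub_le_self 1 (by positivity)
    rw [setIntegral_G hn hθ0 hθ1, one_div_mul_eq_div]
    exact mul_le_of_le_one_right (div_nonneg (rate_nonneg hθ0 hθ1 n) (by norm_num)) factor_le_one
  · have n_rpow_le_half : (n : ℝ) ^ (-(1 - θ) / 2) ≤ 2⁻¹ :=
      rpow_neg_half_le_inv_of_sq_le n.cast_nonneg two_pos (by linarith)
    have half_le_factor : 1 / 2 ≤ 1 - (n : ℝ) ^ (-(1 - θ) / 2) := by linarith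
    rw [setIntegral_G hn hθ0 hθ1]
    calc
      _ = (n : ℝ) ^ (2 - θ) * θ ^ (-1 : ℝ) * (1 - θ) ^ (-3 : ℝ) / 8 * (1 / 2) := by ring
      _ ≤ _ := mul_le_mul_of_nonneg_left half_le_factor
        (div_nonneg (rate_nonneg hθ0 hθ1 n) (by norm_num))
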